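/- Let X_n (n ∈ ℕ) and X be real-valued random variables whose moment generating functions M_{X_n}(s) = E[e^{s X_n}] and M_X(s) = E[e^{s X}] are finite for all s in a nonempty open interval U ⊆ ℝ. If M_{X_n}(s) → M_X(s) for every s ∈ U, then X_n converges in distribution to X. -/

import Mathlib

/-!
Tilting every law by `exp (s x)` at a point `s ∈ U` translates its moment generating function by
`s` (up to normalisation), so the problem moves to a neighbourhood of `0`. There, bounds on the
moment generating functions at some `u < 0 < v` give tightness. For `u < t < v` the function
`exp (t x)` is negligible at infinity compared with `exp (u x) + exp (v x)`, so the moment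
generating functions converge along any filter along which the laws converge weakly.
Every cluster point therefore has the moment generating function of the limit near `0`, hence by
analytic continuation its characteristic function.

Undoing the tilt multiplies test functions by the possibly unbounded `exp (-s x)`. Fatou's lemma
still bounds the lower limits, and this suffices: applied to `g` and to `C - g` it gives both
halves of convergence, because no mass is lost in the limit.
-/

open MeasureTheory ProbabilityTheory Filter Topology Asymptotics
open scoped NNReal ENNReal BoundedContinuousFunction

section WeakConvergence

variable {ι E F G : Type*} {l : Filter ι} [TopologicalSpace E] [NormedAddCommGroup F]
  [NormedAddCommGroup G]

lemma exists_nnnorm_le_min_add_mul_of_isLittleO_cocompact {f : E → F} {g : E → G}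
    (hf : Continuous f) (hfg : f =o[cocompact E] g) {δ : ℝ≥0} (hδ : 0 < δ) :
    ∃ K : ℝ≥0, ∀ x, ‖f x‖₊ ≤ min ‖f x‖₊ K + δ * ‖g x‖₊ := by
  obtain ⟨s, hs, hfs⟩ := mem_cocompact.1 (hfg.def (NNReal.coe_pos.2 hδ))
  obtain ⟨K, hK⟩ := hs.bddAbove_image (hf.nnnorm.continuousOn (s := s))
  refine ⟨K, fun x ↦ ?_⟩
  by_cases hx : x ∈ s
  · rw [min_eq_left (hK ⟨x, hx, rfl⟩)]
    exact le_self_add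
  · exact (show ‖f x‖₊ ≤ δ * ‖g x‖₊ from hfs hx).trans le_add_self

variable [MeasurableSpace E] [OpensMeasurableSpace E]

lemma isTightMeasureSet_of_lintegral_enorm_le [T2Space E] {S : Set (Measure E)} {g : E → G}
    {C : ℝ≥0} (hg : Tendsto (fun x ↦ ‖g x‖) (cocompact E) atTop)
    (hC : ∀ μ ∈ S, ∫⁻ x, ‖g x‖ₑ ∂μ ≤ C) : IsTightMeasureSet S := by
  refine isTightMeasureSet_iff_exists_isCompact_measure_compl_le.2 fun ε hε ↦ ?_
  obtain ⟨δ, hδ, hδε⟩ := ENNReal.lt_iff_exists_nnreal_btwn.1 hε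
  have hδ : 0 < δ := ENNReal.coe_pos.1 hδ
  let M : ℝ≥0 := (C + 1) / δ
  have hM : 0 < M := by positivity
  obtain ⟨K, hK, hgK⟩ := mem_cocompact.1 (hg.eventually_ge_atTop (M : ℝ))
  refine ⟨K, hK, fun μ hμ ↦ le_trans ?_ hδε.le⟩
  have markov : M * μ Kᶜ ≤ C := calc
    M * μ Kᶜ = ∫⁻ _ in Kᶜ, M ∂μ := (setLIntegral_const _ _).symm
    _ ≤ ∫⁻ x in Kᶜ, ‖g x‖ₑ ∂μ := setLIntegral_mono' hK.measurableSet.compl fun x hx ↦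
        ENNReal.coe_le_coe.2 (hgK hx)
    _ ≤ ∫⁻ x, ‖g x‖ₑ ∂μ := setLIntegral_le_lintegral _ _
    _ ≤ C := hC μ hμ
  have C_le : C ≤ M * δ := by rw [div_mul_cancel₀ _ hδ.ne']; exact le_self_add
  refine (ENNReal.mul_le_mul_iff_right (ENNReal.coe_ne_zero.2 hM.ne') ENNReal.coe_ne_top).1 ?_
  exact markov.trans (by exact_mod_cast C_le)

variable {ρ : ι → ProbabilityMeasure E} {ρ₀ : ProbabilityMeasure E}

lemma tendsto_lintegral_min_of_tendsto (h : Tendsto ρ l (𝓝 ρ₀)) {f : E → ℝ≥0}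
    (hf : Continuous f) (K : ℝ≥0) :
    Tendsto (fun i ↦ ∫⁻ x, (min (f x) K : ℝ≥0) ∂(ρ i : Measure E)) l
      (𝓝 (∫⁻ x, (min (f x) K : ℝ≥0) ∂(ρ₀ : Measure E))) :=
  ProbabilityMeasure.tendsto_iff_forall_lintegral_tendsto.1 h <|
    .mkOfBound ⟨fun x ↦ min (f x) K, hf.min continuous_const⟩ K fun x y ↦
      (Real.dist_le_of_mem_Icc (x := (min (f x) K : ℝ≥0)) (y := (min (f y) K : ℝ≥0))
        ⟨NNReal.coe_nonneg _, NNReal.coe_le_coe.2 (min_le_right _ _)⟩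
        ⟨NNReal.coe_nonneg _, NNReal.coe_le_coe.2 (min_le_right _ _)⟩).trans_eq (sub_zero _)

lemma lintegral_le_liminf_lintegral_of_tendsto (h : Tendsto ρ l (𝓝 ρ₀)) {f : E → ℝ≥0}
    (hf : Continuous f) :
    ∫⁻ x, f x ∂(ρ₀ : Measure E) ≤ liminf (fun i ↦ ∫⁻ x, f x ∂(ρ i : Measure E)) l := by
  rcases l.eq_or_neBot with rfl | _
  · simp
  have iSup_min (x : E) : (f x : ℝ≥0∞) = ⨆ n : ℕ, ((min (f x) n : ℝ≥0) : ℝ≥0∞) := by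
    refine le_antisymm ?_ (iSup_le fun n ↦ ENNReal.coe_le_coe.2 (min_le_left _ _))
    obtain ⟨n, hn⟩ := exists_nat_ge (f x)
    exact le_iSup_of_le n (by rw [min_eq_left hn])
  calc ∫⁻ x, f x ∂(ρ₀ : Measure E)
      = ⨆ n : ℕ, ∫⁻ x, (min (f x) n : ℝ≥0) ∂(ρ₀ : Measure E) := by
        simp_rw [iSup_min]
        refine lintegral_iSup (fun n ↦ ?_) fun m n hmn x ↦ ?_
        · exact (hf.min continuous_const).measurable.coe_nnreal_ennreal
        · exact ENNReal.coe_le_coe.2 (min_le_min_left _ (by exact_mod_cast hmn))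
    _ ≤ liminf (fun i ↦ ∫⁻ x, f x ∂(ρ i : Measure E)) l := iSup_le fun n ↦ by
        rw [← (tendsto_lintegral_min_of_tendsto h hf n).liminf_eq]
        exact liminf_le_liminf <| .of_forall fun i ↦ lintegral_mono fun x ↦
          ENNReal.coe_le_coe.2 (min_le_left _ _)

lemma lintegral_enorm_le_of_tendsto [l.NeBot] (h : Tendsto ρ l (𝓝 ρ₀)) {g : E → G} {C : ℝ≥0∞}
    (hg : Continuous g) (hC : ∀ᶠ i in l, ∫⁻ x, ‖g x‖ₑ ∂(ρ i : Measure E) ≤ C) :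
    ∫⁻ x, ‖g x‖ₑ ∂(ρ₀ : Measure E) ≤ C :=
  (lintegral_le_liminf_lintegral_of_tendsto h hg.nnnorm).trans <|
    (liminf_le_liminf hC).trans_eq (liminf_const C)

lemma limsup_lintegral_enorm_le_of_isLittleO (h : Tendsto ρ l (𝓝 ρ₀)) {f : E → F} {g : E → G}
    {C : ℝ≥0} (hf : Continuous f) (hfg : f =o[cocompact E] g)
    (hC : ∀ᶠ i in l, ∫⁻ x, ‖g x‖ₑ ∂(ρ i : Measure E) ≤ C) :
    limsup (fun i ↦ ∫⁻ x, ‖f x‖ₑ ∂(ρ i : Measure E)) l ≤ ∫⁻ x, ‖f x‖ₑ ∂(ρ₀ : Measure E) := by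
  rcases l.eq_or_neBot with rfl | _
  · simp
  refine ENNReal.le_of_forall_pos_le_add fun ε hε _ ↦ ?_
  let δ : ℝ≥0 := ε / (C + 1)
  have δC_le : δ * C ≤ ε := by
    rw [div_mul_eq_mul_div]
    exact div_le_of_le_mul₀ (by positivity) (by positivity) (by gcongr; exact le_self_add)
  obtain ⟨K, hK⟩ := exists_nnnorm_le_min_add_mul_of_isLittleO_cocompact hf hfg
    (show 0 < δ by positivity)
  have le_min_add (x : E) : ‖f x‖ₑ ≤ (min ‖f x‖₊ K : ℝ≥0) + δ * ‖g x‖ₑ := by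
    rw [enorm_eq_nnnorm, enorm_eq_nnnorm]
    exact_mod_cast hK x
  have lintegral_le : ∀ᶠ i in l, ∫⁻ x, ‖f x‖ₑ ∂(ρ i : Measure E)
      ≤ ∫⁻ x, (min ‖f x‖₊ K : ℝ≥0) ∂(ρ i : Measure E) + ε := by
    filter_upwards [hC] with i hi
    calc ∫⁻ x, ‖f x‖ₑ ∂(ρ i : Measure E)
        ≤ ∫⁻ x, (min ‖f x‖₊ K : ℝ≥0) + δ * ‖g x‖ₑ ∂(ρ i : Measure E) := lintegral_mono le_min_add
      _ = ∫⁻ x, (min ‖f x‖₊ K : ℝ≥0) ∂(ρ i : Measure E) + δ * ∫⁻ x, ‖g x‖ₑ ∂(ρ i : Measure E) := by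
          rw [lintegral_add_left (hf.nnnorm.min continuous_const).measurable.coe_nnreal_ennreal,
            lintegral_const_mul' _ _ ENNReal.coe_ne_top]
      _ ≤ ∫⁻ x, (min ‖f x‖₊ K : ℝ≥0) ∂(ρ i : Measure E) + δ * C := by gcongr
      _ ≤ _ := by gcongr; exact_mod_cast δC_le
  have min_tendsto := (tendsto_lintegral_min_of_tendsto h hf.nnnorm K).add_const (ε : ℝ≥0∞)
  calc limsup (fun i ↦ ∫⁻ x, ‖f x‖ₑ ∂(ρ i : Measure E)) l
      ≤ ∫⁻ x, (min ‖f x‖₊ K : ℝ≥0) ∂(ρ₀ : Measure E) + ε :=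
        min_tendsto.limsup_eq ▸ limsup_le_limsup lintegral_le
    _ ≤ ∫⁻ x, ‖f x‖ₑ ∂(ρ₀ : Measure E) + ε := by
        gcongr with x; exact ENNReal.coe_le_coe.2 (min_le_left _ _)

lemma tendsto_lintegral_enorm_of_isLittleO (h : Tendsto ρ l (𝓝 ρ₀)) {f : E → F} {g : E → G}
    {C : ℝ≥0} (hf : Continuous f) (hfg : f =o[cocompact E] g)
    (hC : ∀ᶠ i in l, ∫⁻ x, ‖g x‖ₑ ∂(ρ i : Measure E) ≤ C) :
    Tendsto (fun i ↦ ∫⁻ x, ‖f x‖ₑ ∂(ρ i : Measure E)) l (𝓝 (∫⁻ x, ‖f x‖ₑ ∂(ρ₀ : Measure E))) :=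
  tendsto_of_le_liminf_of_limsup_le (lintegral_le_liminf_lintegral_of_tendsto h hf.nnnorm)
    (limsup_lintegral_enorm_le_of_isLittleO h hf hfg hC)

lemma tendsto_probabilityMeasure_of_forall_lintegral_le_liminf
    (h : ∀ g : E →ᵇ ℝ≥0, ∫⁻ x, g x ∂(ρ₀ : Measure E)
      ≤ liminf (fun i ↦ ∫⁻ x, g x ∂(ρ i : Measure E)) l) :
    Tendsto ρ l (𝓝 ρ₀) := by
  refine ProbabilityMeasure.tendsto_iff_forall_lintegral_tendsto.2 fun g ↦
    tendsto_of_le_liminf_of_limsup_le (h g) ?_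
  let C : ℝ≥0 := nndist g 0
  let g' : E →ᵇ ℝ≥0 := .const E C - g
  have lintegral_eq (κ : ProbabilityMeasure E) :
      ∫⁻ x, g x ∂(κ : Measure E) = C - ∫⁻ x, g' x ∂(κ : Measure E) := by
    refine ENNReal.eq_sub_of_add_eq (g'.lintegral_lt_top_of_nnreal _).ne ?_
    rw [← lintegral_add_left g.measurable_coe_ennreal_comp]
    have add_eq (x : E) : (g x : ℝ≥0∞) + g' x = C :=
      mod_cast add_tsub_cancel_of_le (BoundedContinuousFunction.NNReal.upper_bound g x)
    simp [add_eq]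
  calc limsup (fun i ↦ ∫⁻ x, g x ∂(ρ i : Measure E)) l
      = C - liminf (fun i ↦ ∫⁻ x, g' x ∂(ρ i : Measure E)) l := by
        simp_rw [lintegral_eq]; exact ENNReal.limsup_const_sub _ _ ENNReal.coe_ne_top
    _ ≤ C - ∫⁻ x, g' x ∂(ρ₀ : Measure E) := tsub_le_tsub_left (h g') _
    _ = ∫⁻ x, g x ∂(ρ₀ : Measure E) := (lintegral_eq ρ₀).symm

end WeakConvergence

section Tilting

variable {ι E : Type*} {l : Filter ι} [MeasurableSpace E] {f : E → ℝ}

lemma lintegral_eq_integral_exp_mul_lintegral_tilted {κ : Measure E} [NeZero κ]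
    (hf : Integrable (fun x ↦ Real.exp (f x)) κ) (g : E → ℝ≥0∞) :
    ∫⁻ x, g x ∂κ = ENNReal.ofReal (∫ x, Real.exp (f x) ∂κ) *
      ∫⁻ x, ENNReal.ofReal (Real.exp (-f x)) * g x ∂(κ.tilted f) := by
  have hpos : 0 < ∫ x, Real.exp (f x) ∂κ := integral_exp_pos hf
  rw [lintegral_tilted, ← lintegral_const_mul' _ _ ENNReal.ofReal_ne_top]
  refine lintegral_congr fun x ↦ ?_
  rw [← mul_assoc, ← mul_assoc, ← ENNReal.ofReal_mul hpos.le, ← ENNReal.ofReal_mul (by positivity),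
    mul_div_cancel₀ _ hpos.ne', ← Real.exp_add, add_neg_cancel, Real.exp_zero, ENNReal.ofReal_one,
    one_mul]

/-- The exponential tilt `exp f / ∫ exp f ∂κ` of `κ` as a bundled probability measure.
Integrability of `exp f` is part of the data because `Measure.tilted` is `0` without it. -/
noncomputable def tiltedProbabilityMeasure (κ : ProbabilityMeasure E) (f : E → ℝ)
    (hf : Integrable (fun x ↦ Real.exp (f x)) (κ : Measure E)) : ProbabilityMeasure E :=
  ⟨(κ : Measure E).tilted f, isProbabilityMeasure_tilted hf⟩

variable [TopologicalSpace E] [OpensMeasurableSpace E] {κ : ι → ProbabilityMeasure E}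
  {κ₀ : ProbabilityMeasure E}

lemma tendsto_of_tendsto_tiltedProbabilityMeasure (hf : Continuous f)
    (hκ : ∀ i, Integrable (fun x ↦ Real.exp (f x)) (κ i : Measure E))
    (hκ₀ : Integrable (fun x ↦ Real.exp (f x)) (κ₀ : Measure E))
    (h : Tendsto (fun i ↦ tiltedProbabilityMeasure (κ i) f (hκ i)) l
      (𝓝 (tiltedProbabilityMeasure κ₀ f hκ₀)))
    (hint : Tendsto (fun i ↦ ∫ x, Real.exp (f x) ∂(κ i : Measure E)) l
      (𝓝 (∫ x, Real.exp (f x) ∂(κ₀ : Measure E)))) :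
    Tendsto κ l (𝓝 κ₀) := by
  refine tendsto_probabilityMeasure_of_forall_lintegral_le_liminf fun g ↦ ?_
  rcases l.eq_or_neBot with rfl | _
  · simp
  have fatou := lintegral_le_liminf_lintegral_of_tendsto h
    (f := fun x ↦ (Real.exp (-f x)).toNNReal * g x) (by fun_prop)
  simp only [ENNReal.coe_mul] at fatou
  rw [lintegral_eq_integral_exp_mul_lintegral_tilted hκ₀, ← (ENNReal.tendsto_ofReal hint).liminf_eq]
  simp_rw [fun i ↦ lintegral_eq_integral_exp_mul_lintegral_tilted (hκ i)]
  exact (mul_le_mul_right fatou _).trans ENNReal.le_liminf_mul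

end Tilting

section Mgf

variable {ι : Type*} {l : Filter ι} {t u v : ℝ}

lemma isLittleO_exp_mul_cocompact (hut : u < t) (htv : t < v) :
    (fun x ↦ Real.exp (t * x)) =o[cocompact ℝ] fun x ↦ Real.exp (u * x) + Real.exp (v * x) := by
  have exp_isBigO_add (w : ℝ) (hw : w = u ∨ w = v) (m : Filter ℝ) :
      (fun x ↦ Real.exp (w * x)) =O[m] fun x ↦ Real.exp (u * x) + Real.exp (v * x) := by
    refine isBigO_of_le _ fun x ↦ ?_
    rw [Real.norm_of_nonneg (by positivity), Real.norm_of_nonneg (by positivity)]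
    obtain rfl | rfl := hw
    · exact le_add_of_nonneg_right (Real.exp_nonneg _)
    · exact le_add_of_nonneg_left (Real.exp_nonneg _)
  rw [cocompact_eq_atBot_atTop, isLittleO_sup]
  constructor
  · refine (Real.isLittleO_exp_comp_exp_comp.2 ?_).trans_isBigO (exp_isBigO_add u (.inl rfl) _)
    simp_rw [← sub_mul]
    exact tendsto_id.const_mul_atBot_of_neg (sub_neg.2 hut)
  · refine (Real.isLittleO_exp_comp_exp_comp.2 ?_).trans_isBigO (exp_isBigO_add v (.inr rfl) _)
    simp_rw [← sub_mul]
    exact tendsto_id.const_mul_atTop (sub_pos.2 htv)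

lemma tendsto_norm_exp_mul_add_exp_mul_cocompact (hu : u < 0) (hv : 0 < v) :
    Tendsto (fun x ↦ ‖Real.exp (u * x) + Real.exp (v * x)‖) (cocompact ℝ) atTop := by
  have one_isLittleO := isLittleO_exp_mul_cocompact hu hv
  simp only [zero_mul, Real.exp_zero] at one_isLittleO
  exact (isLittleO_one_left_iff ℝ).1 one_isLittleO

lemma lintegral_enorm_exp_mul_add_exp_mul {ρ : Measure ℝ} (hu : u ∈ integrableExpSet id ρ)
    (hv : v ∈ integrableExpSet id ρ) :
    ∫⁻ x, ‖Real.exp (u * x) + Real.exp (v * x)‖ₑ ∂ρ = ENNReal.ofReal (mgf id ρ u + mgf id ρ v) := by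
  calc ∫⁻ x, ‖Real.exp (u * x) + Real.exp (v * x)‖ₑ ∂ρ
      = ∫⁻ x, ENNReal.ofReal (Real.exp (u * x) + Real.exp (v * x)) ∂ρ :=
        lintegral_congr fun x ↦ Real.enorm_of_nonneg (by positivity)
    _ = ENNReal.ofReal (∫ x, Real.exp (u * x) + Real.exp (v * x) ∂ρ) :=
        (ofReal_integral_eq_lintegral_ofReal (hu.add hv)
          (ae_of_all _ fun x ↦ add_nonneg (Real.exp_nonneg _) (Real.exp_nonneg _))).symm
    _ = ENNReal.ofReal (mgf id ρ u + mgf id ρ v) := congrArg _ (integral_add hu hv)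

variable {ρ : ι → ProbabilityMeasure ℝ} {ρ₀ : ProbabilityMeasure ℝ}

lemma tendsto_mgf_of_tendsto [l.NeBot] (h : Tendsto ρ l (𝓝 ρ₀)) {C : ℝ≥0}
    (hut : u < t) (htv : t < v)
    (hC : ∀ᶠ i in l, ∫⁻ x, ‖Real.exp (u * x) + Real.exp (v * x)‖ₑ ∂(ρ i : Measure ℝ) ≤ C) :
    t ∈ integrableExpSet id (ρ₀ : Measure ℝ) ∧
      Tendsto (fun i ↦ mgf id (ρ i : Measure ℝ) t) l (𝓝 (mgf id (ρ₀ : Measure ℝ) t)) := by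
  have exp_isLittleO := isLittleO_exp_mul_cocompact hut htv
  have add_integrable :
      Integrable (fun x ↦ Real.exp (u * x) + Real.exp (v * x)) (ρ₀ : Measure ℝ) :=
    ⟨by fun_prop, (lintegral_enorm_le_of_tendsto h (by fun_prop) hC).trans_lt ENNReal.coe_lt_top⟩
  have exp_integrable : Integrable (fun x ↦ Real.exp (t * x)) (ρ₀ : Measure ℝ) :=
    (by fun_prop : Continuous fun x ↦ Real.exp (t * x)).locallyIntegrable
      |>.integrable_of_isBigO_cocompact exp_isLittleO.isBigO (add_integrable.integrableAtFilter _)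
  have mgf_eq (κ : Measure ℝ) : mgf id κ t = (∫⁻ x, ‖Real.exp (t * x)‖ₑ ∂κ).toReal := by
    rw [← integral_norm_eq_lintegral_enorm (by fun_prop)]
    simp [mgf]
  simp_rw [mgf_eq]
  exact ⟨exp_integrable, (ENNReal.tendsto_toReal exp_integrable.2.ne).comp
    (tendsto_lintegral_enorm_of_isLittleO h (by fun_prop) exp_isLittleO hC)⟩

end Mgf

section Uniqueness

variable {Ω Ω' : Type*} [MeasurableSpace Ω] [MeasurableSpace Ω'] {X : Ω → ℝ} {Y : Ω' → ℝ}
  {μ : Measure Ω} {ν : Measure Ω'} {t : ℝ}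

lemma eqOn_complexMGF_of_frequently_mgf_eq (htX : t ∈ interior (integrableExpSet X μ))
    (htY : t ∈ interior (integrableExpSet Y ν)) (h : ∃ᶠ x in 𝓝[≠] t, mgf X μ x = mgf Y ν x) :
    Set.EqOn (complexMGF X μ) (complexMGF Y ν)
      {z | z.re ∈ interior (integrableExpSet X μ) ∩ interior (integrableExpSet Y ν)} := by
  have strip_preconnected : IsPreconnected
      {z : ℂ | z.re ∈ interior (integrableExpSet X μ) ∩ interior (integrableExpSet Y ν)} :=
    ((convex_integrableExpSet.interior.inter convex_integrableExpSet.interior).linear_preimage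
      Complex.reLm).isPreconnected
  have ofReal_tendsto : Tendsto ((↑) : ℝ → ℂ) (𝓝[≠] t) (𝓝[≠] (t : ℂ)) :=
    Complex.continuous_ofReal.continuousWithinAt.tendsto_nhdsWithin fun x hx ↦ by simpa using hx
  refine AnalyticOnNhd.eqOn_of_preconnected_of_frequently_eq (𝕜 := ℂ)
    (analyticOnNhd_complexMGF.mono fun z hz ↦ hz.1)
    (analyticOnNhd_complexMGF.mono fun z hz ↦ hz.2) strip_preconnected (z₀ := t) ⟨htX, htY⟩ ?_
  exact ofReal_tendsto.frequently <| h.mono fun x hx ↦ by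
    rw [complexMGF_ofReal, complexMGF_ofReal, hx]

lemma measure_eq_of_frequently_mgf_id_eq {ρ ρ' : Measure ℝ} [IsFiniteMeasure ρ] [IsFiniteMeasure ρ']
    (hρ : 0 ∈ interior (integrableExpSet id ρ)) (hρ' : 0 ∈ interior (integrableExpSet id ρ'))
    (h : ∃ᶠ t in 𝓝[≠] 0, mgf id ρ t = mgf id ρ' t) : ρ = ρ' := by
  refine Measure.ext_of_charFun (funext fun t ↦ ?_)
  rw [← complexMGF_id_mul_I, ← complexMGF_id_mul_I]
  exact eqOn_complexMGF_of_frequently_mgf_eq hρ hρ' h (by simpa using ⟨hρ, hρ'⟩)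

end Uniqueness

section Curtiss

variable {ι : Type*} {l : Filter ι} {ρ : ι → ProbabilityMeasure ℝ} {ρ₀ : ProbabilityMeasure ℝ}

lemma exists_eventually_lintegral_enorm_exp_mul_add_exp_mul_le {u v : ℝ}
    (hu : ∀ i, u ∈ integrableExpSet id (ρ i : Measure ℝ))
    (hv : ∀ i, v ∈ integrableExpSet id (ρ i : Measure ℝ)) {a b : ℝ}
    (hua : Tendsto (fun i ↦ mgf id (ρ i : Measure ℝ) u) l (𝓝 a))
    (hvb : Tendsto (fun i ↦ mgf id (ρ i : Measure ℝ) v) l (𝓝 b)) :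
    ∃ C : ℝ≥0, ∀ᶠ i in l,
      ∫⁻ x, ‖Real.exp (u * x) + Real.exp (v * x)‖ₑ ∂(ρ i : Measure ℝ) ≤ C := by
  refine ⟨(a + b + 1).toNNReal, ?_⟩
  filter_upwards [(hua.add hvb).eventually_le_const (lt_add_one _)] with i hi
  rw [lintegral_enorm_exp_mul_add_exp_mul (hu i) (hv i)]
  exact ENNReal.ofReal_le_ofReal hi

lemma eq_of_mapClusterPt_of_tendsto_mgf {u v : ℝ} (hu : u < 0) (hv : 0 < v)
    {C : ℝ≥0} {ρ' : ProbabilityMeasure ℝ}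
    (hC : ∀ᶠ i in l, ∫⁻ x, ‖Real.exp (u * x) + Real.exp (v * x)‖ₑ ∂(ρ i : Measure ℝ) ≤ C)
    (hρ₀ : ∀ᶠ t in 𝓝 0, t ∈ integrableExpSet id (ρ₀ : Measure ℝ))
    (h : ∀ᶠ t in 𝓝 0, Tendsto (fun i ↦ mgf id (ρ i : Measure ℝ) t) l
      (𝓝 (mgf id (ρ₀ : Measure ℝ) t)))
    (hρ' : MapClusterPt ρ' l ρ) : ρ' = ρ₀ := by
  obtain ⟨U, hUl, hU⟩ := mapClusterPt_iff_ultrafilter.1 hρ'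
  have mgf_tendsto : ∀ᶠ t in 𝓝 0, t ∈ integrableExpSet id (ρ' : Measure ℝ) ∧
      Tendsto (fun i ↦ mgf id (ρ i : Measure ℝ) t) U (𝓝 (mgf id (ρ' : Measure ℝ) t)) := by
    filter_upwards [Ioo_mem_nhds hu hv] with t ht
    exact tendsto_mgf_of_tendsto hU ht.1 ht.2 (hC.filter_mono hUl)
  have mgf_eq : ∀ᶠ t in 𝓝 0, mgf id (ρ' : Measure ℝ) t = mgf id (ρ₀ : Measure ℝ) t := by
    filter_upwards [mgf_tendsto, h] with t ht ht₀
    exact tendsto_nhds_unique ht.2 (ht₀.mono_left hUl)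
  exact Subtype.ext <| measure_eq_of_frequently_mgf_id_eq
    (ρ := (ρ' : Measure ℝ)) (ρ' := (ρ₀ : Measure ℝ))
    (mem_interior_iff_mem_nhds.2 (mgf_tendsto.mono fun _ ↦ And.left))
    (mem_interior_iff_mem_nhds.2 hρ₀) (mgf_eq.filter_mono nhdsWithin_le_nhds).frequently

lemma tendsto_probabilityMeasure_of_tendsto_mgf_nhds_zero
    (hρ : ∀ᶠ t in 𝓝 0, ∀ i, t ∈ integrableExpSet id (ρ i : Measure ℝ))
    (hρ₀ : ∀ᶠ t in 𝓝 0, t ∈ integrableExpSet id (ρ₀ : Measure ℝ))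
    (h : ∀ᶠ t in 𝓝 0, Tendsto (fun i ↦ mgf id (ρ i : Measure ℝ) t) l
      (𝓝 (mgf id (ρ₀ : Measure ℝ) t))) :
    Tendsto ρ l (𝓝 ρ₀) := by
  obtain ⟨v, ⟨hρv, hv⟩, v_pos⟩ := ((hρ.and h).filter_mono nhdsWithin_le_nhds |>.and
    (self_mem_nhdsWithin (s := Set.Ioi 0))).exists
  obtain ⟨u, ⟨hρu, hu⟩, u_neg⟩ := ((hρ.and h).filter_mono nhdsWithin_le_nhds |>.and
    (self_mem_nhdsWithin (s := Set.Iio 0))).exists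
  obtain ⟨C, hC⟩ := exists_eventually_lintegral_enorm_exp_mul_add_exp_mul_le hρu hρv hu hv
  let S : Set (ProbabilityMeasure ℝ) :=
    {κ | ∫⁻ x, ‖Real.exp (u * x) + Real.exp (v * x)‖ₑ ∂(κ : Measure ℝ) ≤ C}
  have S_compact : IsCompact (closure S) := by
    refine isCompact_closure_of_isTightMeasureSet <| isTightMeasureSet_of_lintegral_enorm_le
      (C := C) (tendsto_norm_exp_mul_add_exp_mul_cocompact u_neg v_pos) ?_
    rintro _ ⟨κ, hκ, rfl⟩
    exact hκ
  exact S_compact.tendsto_nhds_of_unique_mapClusterPt (hC.mono fun i hi ↦ subset_closure hi)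
    fun ρ' _ hρ' ↦ eq_of_mapClusterPt_of_tendsto_mgf u_neg v_pos hC hρ₀ h hρ'

lemma mgf_id_tilted (κ : Measure ℝ) (s t : ℝ) :
    mgf id (κ.tilted (s * ·)) t = mgf id κ (s + t) / mgf id κ s := by
  simp only [mgf, id, integral_exp_tilted, Pi.add_apply, add_mul]

lemma mem_integrableExpSet_id_tilted_iff {κ : Measure ℝ} {s t : ℝ}
    (hs : s ∈ integrableExpSet id κ) :
    t ∈ integrableExpSet id (κ.tilted (s * ·)) ↔ s + t ∈ integrableExpSet id κ := by
  simp only [integrableExpSet, Set.mem_ofPred_eq, id, add_mul, Real.exp_add]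
  exact integrable_tilted_iff hs _

lemma tendsto_probabilityMeasure_of_tendsto_mgf_nhds {s : ℝ}
    (hρ : ∀ᶠ t in 𝓝 s, ∀ i, t ∈ integrableExpSet id (ρ i : Measure ℝ))
    (hρ₀ : ∀ᶠ t in 𝓝 s, t ∈ integrableExpSet id (ρ₀ : Measure ℝ))
    (h : ∀ᶠ t in 𝓝 s, Tendsto (fun i ↦ mgf id (ρ i : Measure ℝ) t) l
      (𝓝 (mgf id (ρ₀ : Measure ℝ) t))) :
    Tendsto ρ l (𝓝 ρ₀) := by
  have add_tendsto : Tendsto (s + ·) (𝓝 0) (𝓝 s) := by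
    simpa using (continuous_const_add s).tendsto 0
  have hρs := hρ.self_of_nhds
  have hρ₀s := hρ₀.self_of_nhds
  refine tendsto_of_tendsto_tiltedProbabilityMeasure (continuous_const_mul s) hρs hρ₀s ?_
    h.self_of_nhds
  refine tendsto_probabilityMeasure_of_tendsto_mgf_nhds_zero ?_ ?_ ?_
  · filter_upwards [add_tendsto.eventually hρ] with t ht i
    exact (mem_integrableExpSet_id_tilted_iff (hρs i)).2 (ht i)
  · filter_upwards [add_tendsto.eventually hρ₀] with t ht
    exact (mem_integrableExpSet_id_tilted_iff hρ₀s).2 ht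
  · filter_upwards [add_tendsto.eventually h] with t ht
    simp only [tiltedProbabilityMeasure, ProbabilityMeasure.coe_mk, mgf_id_tilted]
    exact ht.div h.self_of_nhds (mgf_pos hρ₀s).ne'

end Curtiss

section Distribution

variable {ι : Type*} {l : Filter ι} {Ω : ι → Type*} {Ω' : Type*} [∀ i, MeasurableSpace (Ω i)]
  [MeasurableSpace Ω'] {P : (i : ι) → Measure (Ω i)} [∀ i, IsProbabilityMeasure (P i)]
  {Q : Measure Ω'} [IsProbabilityMeasure Q] {X : (i : ι) → Ω i → ℝ} {Y : Ω' → ℝ}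

lemma measure_singleton_eq_zero_of_continuousAt_cdf {ρ : Measure ℝ} [IsProbabilityMeasure ρ]
    {x : ℝ} (hx : ContinuousAt (cdf ρ) x) : ρ {x} = 0 := by
  rw [← measure_cdf ρ, StieltjesFunction.measure_singleton,
    leftLim_eq_of_tendsto (hx.tendsto.mono_left nhdsWithin_le_nhds), sub_self, ENNReal.ofReal_zero]

lemma tendsto_cdf_of_tendstoInDistribution (h : TendstoInDistribution X l Y P Q) {x : ℝ}
    (hx : ContinuousAt (cdf (Q.map Y)) x) :
    Tendsto (fun i ↦ cdf ((P i).map (X i)) x) l (𝓝 (cdf (Q.map Y) x)) := by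
  have := Measure.isProbabilityMeasure_map h.aemeasurable_limit
  have (i : ι) := Measure.isProbabilityMeasure_map (h.forall_aemeasurable i)
  have null_frontier : Q.map Y (frontier (Set.Iic x)) = 0 := by
    rw [frontier_Iic]
    exact measure_singleton_eq_zero_of_continuousAt_cdf hx
  simp_rw [cdf_eq_real]
  exact (ENNReal.tendsto_toReal (measure_ne_top _ _)).comp <|
    ProbabilityMeasure.tendsto_measure_of_null_frontier_of_tendsto' h.tendsto null_frontier

theorem curtiss_modified_general (hX : ∀ i, AEMeasurable (X i) (P i)) (hY : AEMeasurable Y Q)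
    {U : Set ℝ} (hU : (interior U).Nonempty)
    (hintX : ∀ s ∈ U, ∀ i, Integrable (fun ω ↦ Real.exp (s * X i ω)) (P i))
    (hintY : ∀ s ∈ U, Integrable (fun ω ↦ Real.exp (s * Y ω)) Q)
    (hconv : ∀ s ∈ U, Tendsto (fun i ↦ mgf (X i) (P i) s) l (𝓝 (mgf Y Q s))) :
    TendstoInDistribution X l Y P Q where
  forall_aemeasurable := hX
  tendsto := by
    obtain ⟨s, hs⟩ := hU
    refine tendsto_probabilityMeasure_of_tendsto_mgf_nhds (s := s) ?_ ?_ ?_ <;>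
      filter_upwards [mem_interior_iff_mem_nhds.1 hs] with t ht
    · exact fun i ↦ (integrable_map_measure (by fun_prop) (hX i)).2 (hintX t ht i)
    · exact (integrable_map_measure (by fun_prop) hY).2 (hintY t ht)
    · simpa only [ProbabilityMeasure.coe_mk, mgf_id_map hY, mgf_id_map (hX _)] using hconv t ht

end Distribution

open MeasureTheory ProbabilityTheory Filter in
/-- Modified Curtiss theorem (Kim–Lee): if the moment generating functions of real random
variables `X n` and `Y` are finite on a nonempty open set `U ⊆ ℝ` and
`mgf (X n) s → mgf Y s` for every `s ∈ U`, then `X n` converges in distribution to `Y`,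
i.e. the CDFs converge at every continuity point of the CDF of `Y`. -/
theorem curtiss_modified {Ω : Type*} [MeasurableSpace Ω] (μ : Measure Ω)
    [IsProbabilityMeasure μ] (X : ℕ → Ω → ℝ) (Y : Ω → ℝ)
    (hX : ∀ n, Measurable (X n)) (hY : Measurable Y)
    (U : Set ℝ) (hU : IsOpen U) (hUne : U.Nonempty)
    (hintX : ∀ s ∈ U, ∀ n, Integrable (fun ω => Real.exp (s * X n ω)) μ)
    (hintY : ∀ s ∈ U, Integrable (fun ω => Real.exp (s * Y ω)) μ)
    (hconv : ∀ s ∈ U, Tendsto (fun n => mgf (X n) μ s) atTop (nhds (mgf Y μ s))) :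
    ∀ x : ℝ, ContinuousAt (cdf (μ.map Y)) x →
      Tendsto (fun n => cdf (μ.map (X n)) x) atTop (nhds (cdf (μ.map Y) x)) :=
  fun _ hx ↦ tendsto_cdf_of_tendstoInDistribution (curtiss_modified_general
    (fun n ↦ (hX n).aemeasurable) hY.aemeasurable (hU.interior_eq.symm ▸ hUne) hintX hintY hconv) hx
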